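/- Monotonicity in the inclination: for all d ≥ 1, all α, α' ∈ [0,1) with α ≤ α', and all k = 0,…,d, one has p_L(α,d,k) ≤ p_L(α',d,k). -/

import Mathlib

open MeasureTheory Filter ENNReal

/-- Sites of `ℤ^{d+1}`. -/
abbrev Site (d : ℕ) := Fin (d + 1) → ℤ

/-- Site-percolation configurations on `ℤ^{d+1}`: a site is open iff its value is `true`. -/
abbrev Config (d : ℕ) := Site d → Bool

/-- `P` is the i.i.d. Bernoulli(`p`) product measure on `{0,1}^ι`: it is a probability
measure whose cylinder events have the correct product probabilities. -/
def IsBernoulli {ι : Type*} (p : ℝ) (P : Measure (ι → Bool)) : Prop :=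
  IsProbabilityMeasure P ∧
    ∀ (s : Finset ι) (f : ι → Bool),
      P {ω | ∀ x ∈ s, ω x = f x} =
        ∏ x ∈ s, (if f x then ENNReal.ofReal p else ENNReal.ofReal (1 - p))

/-- A function `F : ℤ^d → ℤ` is Lipschitz: `‖x − y‖₁ = 1 → |F x − F y| ≤ 1`. -/
def IsLipschitzFn {d : ℕ} (F : (Fin d → ℤ) → ℤ) : Prop :=
  ∀ x y : Fin d → ℤ, (∑ i, |x i - y i|) = 1 → |F x - F y| ≤ 1

/-- Height `⌊α ∑ᵢ ηᵢ xᵢ⌋` of the tilted plane `L^{α,d}_η` above `x ∈ ℤ^d`. -/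
noncomputable def planeHt (α : ℝ) {d : ℕ} (η x : Fin d → ℤ) : ℤ :=
  ⌊α * ∑ i, (η i : ℝ) * (x i : ℝ)⌋

/-- `η ∈ {-1,0,1}^d`. -/
def IsSign {d : ℕ} (η : Fin d → ℤ) : Prop := ∀ i, η i = -1 ∨ η i = 0 ∨ η i = 1

/-- The event `LIP^{α,d}_η` that there is an open Lipschitz surface lying (strictly) above
the tilted plane `L^{α,d}_η`. -/
def LIP (α : ℝ) {d : ℕ} (η : Fin d → ℤ) : Set (Config d) :=
  {ω | ∃ F : (Fin d → ℤ) → ℤ, IsLipschitzFn F ∧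
    ∀ x : Fin d → ℤ, ω (Fin.snoc x (F x)) = true ∧ planeHt α η x < F x}

/-- `pc` is the critical probability `p_L(α,d,η)` of Lipschitz percolation above the tilted
plane `L^{α,d}_η`: `pc ∈ (0,1)`, for `p` below it there is `P_p`-a.s. no open Lipschitz
surface above the plane, and for `p` above it there `P_p`-a.s. is one.
(Here `P p` is the Bernoulli(`p`) product measure on `{0,1}^{ℤ^{d+1}}`.) -/
def IsCriticalProb {d : ℕ} (P : ℝ → Measure (Config d)) (α : ℝ) (η : Fin d → ℤ)
    (pc : ℝ) : Prop :=
  pc ∈ Set.Ioo (0 : ℝ) 1 ∧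
    (∀ p, 0 ≤ p → p < pc → P p (LIP α η) = 0) ∧
    (∀ p, pc < p → p ≤ 1 → P p (LIP α η) = 1)

/-- The canonical direction vector `η ∈ {-1,0,1}^d` with `k` entries equal to `1`; the
critical probability `p_L(α,d,η)` depends on `η` only through `k = ‖η‖₁`, and
`p_L(α,d,k)` denotes the common value. -/
def etaK (d k : ℕ) : Fin d → ℤ := fun i => if (i : ℕ) < k then 1 else 0

/-!
Surfaces above two functions `b` and `c` have a pointwise maximum that is a surface above `b ⊔ c`.
If `|α| ≤ |α'|` then `α s ≤ |α' s| = max (α' s) (-α' s)`, so the plane of inclination `α` lies below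
the maximum of the plane of inclination `α'` and its mirror image under `x ↦ -x`. The product
measure is invariant under this reflection, hence surfaces above the steeper plane and above its
mirror image almost surely exist simultaneously, and their maximum is a surface above the flatter
plane. Taking the intersection of two events of probability one requires them to be measurable,
which follows from compactness of the set of Lipschitz functions with a given value at the origin.
-/

theorem measure_ext_of_cylinder {ι : Type*} {X : ι → Type*} [∀ i, MeasurableSpace (X i)]
    [∀ i, Countable (X i)] [∀ i, MeasurableSingletonClass (X i)] {μ ν : Measure (∀ i, X i)}
    [IsFiniteMeasure μ]
    (h : ∀ (s : Finset ι) (f : ∀ i, X i),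
      μ {ω | ∀ i ∈ s, ω i = f i} = ν {ω | ∀ i ∈ s, ω i = f i}) :
    μ = ν := by
  suffices hmarginal : ∀ s : Finset ι, ν.map s.restrict = μ.map s.restrict from
    IsProjectiveLimit.unique (P := fun s ↦ μ.map s.restrict) (fun _ ↦ rfl) hmarginal
  refine fun s ↦ Measure.ext_of_singleton fun g ↦ ?_
  have hs : Measurable (s.restrict (π := X)) := s.measurable_restrict
  rw [Measure.map_apply hs (measurableSet_singleton g),
    Measure.map_apply hs (measurableSet_singleton g)]
  obtain hempty | ⟨f, rfl⟩ := (s.restrict ⁻¹' {g} : Set (∀ i, X i)).eq_empty_or_nonempty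
  · simp only [hempty, measure_empty]
  · have hfiber : s.restrict ⁻¹' {s.restrict f} = {ω : ∀ i, X i | ∀ i ∈ s, ω i = f i} := by
      ext ω
      simp [funext_iff]
    rw [hfiber, h]

namespace IsBernoulli

variable {ι κ : Type*} {p : ℝ}

theorem unique {P Q : Measure (ι → Bool)} (hP : IsBernoulli p P) (hQ : IsBernoulli p Q) :
    P = Q :=
  have := hP.1
  measure_ext_of_cylinder fun s f ↦ (hP.2 s f).trans (hQ.2 s f).symm

theorem measurePreserving_comp {P : Measure (ι → Bool)} {Q : Measure (κ → Bool)}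
    (hP : IsBernoulli p P) (hQ : IsBernoulli p Q) (e : ι ↪ κ) :
    MeasurePreserving (fun ω : κ → Bool ↦ ω ∘ e) Q P := by
  have := hQ.1
  have hmeas : Measurable fun ω : κ → Bool ↦ ω ∘ e :=
    measurable_pi_lambda _ fun i ↦ measurable_pi_apply (e i)
  refine ⟨hmeas, IsBernoulli.unique
    ⟨Measure.isProbabilityMeasure_map hmeas.aemeasurable, fun s f ↦ ?_⟩ hP⟩
  have hcyl : MeasurableSet {ω : ι → Bool | ∀ i ∈ s, ω i = f i} :=
    MeasurableSet.pi s.countable_toSet fun i _ ↦ measurableSet_singleton (f i)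
  have hpre : (fun ω : κ → Bool ↦ ω ∘ e) ⁻¹' {ω | ∀ i ∈ s, ω i = f i} =
      {ω | ∀ j ∈ s.map e, ω j = Function.extend e f (fun _ ↦ true) j} := by
    ext ω
    simp [e.injective.extend_apply]
  rw [Measure.map_apply hmeas hcyl, hpre, hQ.2, Finset.prod_map]
  simp only [e.injective.extend_apply]

end IsBernoulli

section

variable {d : ℕ}

theorem exists_l1_dist_eq_one_and_add_one_eq {x y : Fin d → ℤ} (hxy : x ≠ y) :
    ∃ z : Fin d → ℤ, ∑ i, |z i - y i| = 1 ∧ ∑ i, |x i - z i| + 1 = ∑ i, |x i - y i| := by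
  obtain ⟨i, hi⟩ := Function.ne_iff.mp hxy
  let z := y + Pi.single i (x i - y i).sign
  have hzy : ∑ j, |z j - y j| = 1 := by
    simp only [z, Pi.add_apply, add_sub_cancel_left]
    rw [Finset.sum_eq_single i (fun j _ hj ↦ by simp [hj]) (by simp), Pi.single_eq_same,
      Int.abs_sign_of_ne_zero (sub_ne_zero.mpr hi)]
  refine ⟨z, hzy, ?_⟩
  rw [← hzy, ← Finset.sum_add_distrib]
  refine Finset.sum_congr rfl fun j _ ↦ ?_
  obtain rfl | hj := eq_or_ne j i
  · simp only [z, Pi.add_apply, Pi.single_eq_same, abs_eq_max_neg]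
    obtain hlt | hgt := hi.lt_or_gt
    · rw [Int.sign_eq_neg_one_of_neg (sub_neg.mpr hlt)]
      lia
    · rw [Int.sign_eq_one_of_pos (sub_pos.mpr hgt)]
      lia
  · simp [z, hj]

namespace IsLipschitzFn

variable {F G : (Fin d → ℤ) → ℤ}

theorem comp_neg (hF : IsLipschitzFn F) : IsLipschitzFn fun x ↦ F (-x) := fun x y hxy ↦
  hF _ _ <| by simpa only [Pi.neg_apply, neg_sub_neg, abs_sub_comm] using hxy

theorem sup (hF : IsLipschitzFn F) (hG : IsLipschitzFn G) : IsLipschitzFn (F ⊔ G) :=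
  fun x y hxy ↦ (abs_max_sub_max_le_max _ _ _ _).trans (max_le (hF x y hxy) (hG x y hxy))

theorem abs_sub_le (hF : IsLipschitzFn F) (x y : Fin d → ℤ) :
    |F x - F y| ≤ ∑ i, |x i - y i| := by
  obtain ⟨n, hn⟩ := Int.eq_ofNat_of_zero_le
    (Finset.sum_nonneg fun i _ ↦ abs_nonneg (x i - y i) : 0 ≤ ∑ i, |x i - y i|)
  induction n generalizing y with
  | zero =>
    have hxy : x = y := by
      simpa [Finset.sum_eq_zero_iff_of_nonneg, sub_eq_zero, funext_iff] using hn
    simp [hxy]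
  | succ n ih =>
    have hxy : x ≠ y := by
      rintro rfl
      simp only [sub_self, abs_zero, Finset.sum_const_zero] at hn
      lia
    obtain ⟨z, hzy, hz⟩ := exists_l1_dist_eq_one_and_add_one_eq hxy
    calc |F x - F y| ≤ |F x - F z| + |F z - F y| := _root_.abs_sub_le _ _ _
      _ ≤ ∑ i, |x i - z i| + 1 := add_le_add (ih z (by lia)) (hF z y hzy)
      _ = ∑ i, |x i - y i| := hz

end IsLipschitzFn

theorem isClosed_isLipschitzFn : IsClosed {F : (Fin d → ℤ) → ℤ | IsLipschitzFn F} := by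
  simp only [IsLipschitzFn, Set.ofPred_forall]
  exact isClosed_iInter fun x ↦ isClosed_iInter fun y ↦ isClosed_iInter fun _ ↦
    isClosed_le (by fun_prop) continuous_const

theorem isCompact_isLipschitzFn_apply_zero (h : ℤ) :
    IsCompact {F : (Fin d → ℤ) → ℤ | IsLipschitzFn F ∧ F 0 = h} := by
  refine IsCompact.of_isClosed_subset
    (isCompact_univ_pi fun x : Fin d → ℤ ↦ isCompact_Icc (a := h - ∑ i, |x i|)
      (b := h + ∑ i, |x i|))
    (isClosed_isLipschitzFn.inter (isClosed_eq (continuous_apply 0) continuous_const)) ?_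
  rintro F ⟨hF, rfl⟩ x -
  have hx : |F x - F 0| ≤ ∑ i, |x i| := by simpa using hF.abs_sub_le x 0
  rwa [abs_sub_le_iff, sub_le_iff_le_add', sub_le_comm, and_comm] at hx

/-- The event that there is an open Lipschitz surface lying strictly above the graph of `b`. For
`b = planeHt α η` this is, by definition, the event `LIP α η`. -/
def lipAbove (b : (Fin d → ℤ) → ℤ) : Set (Config d) :=
  {ω | ∃ F : (Fin d → ℤ) → ℤ, IsLipschitzFn F ∧
    ∀ x : Fin d → ℤ, ω (Fin.snoc x (F x)) = true ∧ b x < F x}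

theorem isClosed_open_surface_above (b : (Fin d → ℤ) → ℤ) :
    IsClosed {q : Config d × ((Fin d → ℤ) → ℤ) |
      ∀ x : Fin d → ℤ, q.1 (Fin.snoc x (q.2 x)) = true ∧ b x < q.2 x} := by
  have hstate (x : Fin d → ℤ) :
      Continuous fun q : Config d × ((Fin d → ℤ) → ℤ) ↦ q.1 (Fin.snoc x (q.2 x)) := by
    have heval : Continuous fun r : Config d × ℤ ↦ r.1 (Fin.snoc x r.2) :=
      continuous_prod_of_discrete_right.mpr fun n ↦
        continuous_apply (A := fun _ : Site d ↦ Bool) (Fin.snoc x n)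
    exact heval.comp (by fun_prop : Continuous fun q : Config d × ((Fin d → ℤ) → ℤ) ↦ (q.1, q.2 x))
  simp only [Set.ofPred_forall, Set.ofPred_and]
  refine isClosed_iInter fun x ↦ (isClosed_eq (hstate x) continuous_const).inter ?_
  exact (isClosed_discrete (Set.Ioi (b x))).preimage (by fun_prop)

theorem measurableSet_lipAbove (b : (Fin d → ℤ) → ℤ) : MeasurableSet (lipAbove b) := by
  let surfaces (h : ℤ) : Set (Config d × ((Fin d → ℤ) → ℤ)) :=
    Set.univ ×ˢ {F | IsLipschitzFn F ∧ F 0 = h} ∩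
      {q | ∀ x : Fin d → ℤ, q.1 (Fin.snoc x (q.2 x)) = true ∧ b x < q.2 x}
  have hcompact (h : ℤ) : IsCompact (surfaces h) :=
    (isCompact_univ.prod (isCompact_isLipschitzFn_apply_zero h)).inter_right
      (isClosed_open_surface_above b)
  have hunion : lipAbove b = ⋃ h, Prod.fst '' surfaces h := by
    ext ω
    simp [lipAbove, surfaces]
  rw [hunion]
  exact MeasurableSet.iUnion fun h ↦
    ((hcompact h).image continuous_fst).isClosed.measurableSet

theorem lipAbove_anti : Antitone (lipAbove (d := d)) := fun _ _ hbc _ ⟨F, hF, hω⟩ ↦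
  ⟨F, hF, fun x ↦ ⟨(hω x).1, (hbc x).trans_lt (hω x).2⟩⟩

theorem lipAbove_inter_subset_sup (b c : (Fin d → ℤ) → ℤ) :
    lipAbove b ∩ lipAbove c ⊆ lipAbove (b ⊔ c) := by
  rintro ω ⟨⟨F, hF, hFω⟩, G, hG, hGω⟩
  refine ⟨F ⊔ G, hF.sup hG, fun x ↦ ⟨?_, max_lt_max (hFω x).2 (hGω x).2⟩⟩
  rw [Pi.sup_apply]
  rcases max_choice (F x) (G x) with hmax | hmax
  · rw [hmax, (hFω x).1]
  · rw [hmax, (hGω x).1]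

/-- The reflection of `ℤ^{d+1}` that negates the first `d` coordinates and keeps the height. -/
def reflectSite (d : ℕ) : Site d ≃ Site d :=
  Function.Involutive.toPerm (fun y ↦ Fin.snoc (-Fin.init y) (y (Fin.last d))) fun y ↦ by
    simp

theorem reflectSite_snoc (x : Fin d → ℤ) (n : ℤ) :
    reflectSite d (Fin.snoc x n) = Fin.snoc (-x) n := by
  simp [reflectSite, Function.Involutive.toPerm]

theorem mem_lipAbove_comp_neg {b : (Fin d → ℤ) → ℤ} {ω : Config d}
    (hω : ω ∘ reflectSite d ∈ lipAbove b) : ω ∈ lipAbove fun x ↦ b (-x) := by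
  obtain ⟨F, hF, hFω⟩ := hω
  refine ⟨fun x ↦ F (-x), hF.comp_neg, fun x ↦ ⟨?_, (hFω (-x)).2⟩⟩
  simpa only [Function.comp_apply, reflectSite_snoc, neg_neg] using (hFω (-x)).1

variable {α α' : ℝ} {η : Fin d → ℤ}

theorem planeHt_le_sup_planeHt_neg (hαα' : |α| ≤ |α'|) :
    planeHt α η ≤ planeHt α' η ⊔ fun x ↦ planeHt α' η (-x) := by
  intro x
  set s : ℝ := ∑ i, (η i : ℝ) * (x i : ℝ) with hs
  have hneg : ∑ i, (η i : ℝ) * ((-x) i : ℝ) = -s := by simp [hs]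
  have hslope : α * s ≤ max (α' * s) (α' * -s) :=
    calc α * s ≤ |α| * |s| := (le_abs_self _).trans_eq (abs_mul α s)
      _ ≤ |α'| * |s| := by gcongr
      _ = max (α' * s) (α' * -s) := by rw [← abs_mul, abs, mul_neg]
  calc planeHt α η x ≤ ⌊max (α' * s) (α' * -s)⌋ := Int.floor_le_floor hslope
    _ = max ⌊α' * s⌋ ⌊α' * -s⌋ := Int.floor_mono.map_max
    _ = max (planeHt α' η x) (planeHt α' η (-x)) := by simp only [planeHt, hneg, hs]

theorem IsBernoulli.ae_mem_LIP_of_abs_le {p : ℝ} {P : Measure (Config d)} (hP : IsBernoulli p P)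
    (hαα' : |α| ≤ |α'|) (hLIP : ∀ᵐ ω ∂P, ω ∈ LIP α' η) : ∀ᵐ ω ∂P, ω ∈ LIP α η := by
  have hreflect : ∀ᵐ ω ∂P, ω ∘ reflectSite d ∈ LIP α' η :=
    (hP.measurePreserving_comp hP (reflectSite d).toEmbedding).quasiMeasurePreserving.ae hLIP
  filter_upwards [hLIP, hreflect] with ω hω hω'
  exact lipAbove_anti (planeHt_le_sup_planeHt_neg hαα')
    (lipAbove_inter_subset_sup _ _ ⟨hω, mem_lipAbove_comp_neg hω'⟩)

theorem critical_prob_mono_in_inclination_general (hαα' : |α| ≤ |α'|)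
    {P : ℝ → Measure (Config d)} (hP : ∀ p ∈ Set.Icc (0 : ℝ) 1, IsBernoulli p (P p))
    {pc pc' : ℝ} (hpc : IsCriticalProb P α η pc) (hpc' : IsCriticalProb P α' η pc') :
    pc ≤ pc' := by
  by_contra! hlt
  obtain ⟨p, hpc'p, hppc⟩ := exists_between hlt
  have hp : p ∈ Set.Icc (0 : ℝ) 1 := ⟨hpc'.1.1.le.trans hpc'p.le, hppc.le.trans hpc.1.2.le⟩
  have := (hP p hp).1
  have hsteep : ∀ᵐ ω ∂P p, ω ∈ LIP α' η :=
    (mem_ae_iff_prob_eq_one (measurableSet_lipAbove (planeHt α' η))).mpr (hpc'.2.2 p hpc'p hp.2)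
  have hflat : ∀ᵐ ω ∂P p, ω ∈ LIP α η := (hP p hp).ae_mem_LIP_of_abs_le hαα' hsteep
  have hnone : ∀ᵐ ω ∂P p, ω ∉ LIP α η :=
    measure_eq_zero_iff_ae_notMem.mp (hpc.2.1 p hp.1 hppc)
  obtain ⟨ω, hω, hω'⟩ := (hflat.and hnone).exists
  exact hω' hω

end

/-- Monotonicity in the inclination: `α ≤ α'` implies
`p_L(α,d,k) ≤ p_L(α',d,k)`. -/
theorem critical_prob_mono_in_inclination
    {d : ℕ} (hd : 1 ≤ d) (α α' : ℝ) (hα : α ∈ Set.Ico (0 : ℝ) 1)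
    (hα' : α' ∈ Set.Ico (0 : ℝ) 1) (hαα' : α ≤ α') (k : ℕ) (hk : k ≤ d)
    (P : ℝ → Measure (Config d)) (hP : ∀ p ∈ Set.Icc (0 : ℝ) 1, IsBernoulli p (P p))
    (pc pc' : ℝ) (hpc : IsCriticalProb P α (etaK d k) pc)
    (hpc' : IsCriticalProb P α' (etaK d k) pc') :
    pc ≤ pc' := by
  exact critical_prob_mono_in_inclination_general
    (abs_le_abs_of_nonneg hα.1 hαα') hP hpc hpc'
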